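/- For every integer n ≥ 4 there exists a unique function μ₂ : (0,∞) → ℝ that is twice continuously differentiable, positive, satisfies μ₂''(y) + (y/2) μ₂'(y) + ε μ₂(y) = (2 μ₁(y) μ₂(y))^n for all y > 0, y^δ μ₂(y) → λ as y → 0⁺, and y^{2ε} μ₂(y) → 0 as y → ∞. -/

import Mathlib

noncomputable def kap : ℝ := 1 / Real.sqrt Real.pi

noncomputable def eps (n : ℕ) : ℝ := 1 / ((n : ℝ) - 1)

noncomputable def del (n : ℕ) : ℝ := ((n : ℝ) + 2) / ((n : ℝ) - 1)

noncomputable def lam (n : ℕ) : ℝ :=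
  (del n * (del n + 1) / (2 * kap) ^ n) ^ (1 / ((n : ℝ) - 1))

/-- μ₁(y) = erf(y/2). -/
noncomputable def mu1 (y : ℝ) : ℝ :=
  (2 / Real.sqrt Real.pi) * ∫ σ in (0:ℝ)..(y / 2), Real.exp (-σ ^ 2)

/-- The diffusive profile: positive, C² on (0,∞), satisfies
μ₂'' + (y/2)μ₂' + εμ₂ = (2μ₁μ₂)ⁿ, y^δ μ₂(y) → λ as y → 0⁺, y^{2ε} μ₂(y) → 0 as y → ∞. -/
def IsDiffusiveProfile (n : ℕ) (μ : ℝ → ℝ) : Prop :=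
  ContDiffOn ℝ 2 μ (Set.Ioi 0) ∧
  (∀ y ∈ Set.Ioi (0:ℝ), 0 < μ y) ∧
  (∀ y ∈ Set.Ioi (0:ℝ),
    deriv (deriv μ) y + y / 2 * deriv μ y + eps n * μ y = (2 * mu1 y * μ y) ^ n) ∧
  Filter.Tendsto (fun y : ℝ => y ^ del n * μ y) (nhdsWithin 0 (Set.Ioi 0)) (nhds (lam n)) ∧
  Filter.Tendsto (fun y : ℝ => y ^ (2 * eps n) * μ y) Filter.atTop (nhds 0)

lemma second_deriv_nonpos {d d1 : ℝ → ℝ} {d2 y : ℝ} (h1 : ∀ᶠ x in nhds y, HasDerivAt d (d1 x) x)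
    (h2 : HasDerivAt d1 d2 y) (hm : IsLocalMax d y) : d2 ≤ 0 := by
  by_contra hc
  push Not at hc
  have e1 : deriv d =ᶠ[nhds y] d1 := h1.mono fun x hx => hx.deriv
  have e2 : deriv (deriv d) y = d2 := by rw [e1.deriv_eq]; exact h2.deriv
  have hy := h1.self_of_nhds
  have hmin : IsLocalMin d y := isLocalMin_of_deriv_deriv_pos (by rw [e2]; exact hc)
    (hm.deriv_eq_zero) hy.continuousAt
  have hconst : d =ᶠ[nhds y] fun _ => d y := by
    filter_upwards [hm, hmin] with x a b
    exact le_antisymm a b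
  have e3 : deriv d =ᶠ[nhds y] fun _ => 0 := by
    have := hconst.deriv
    simpa using this
  have : deriv (deriv d) y = 0 := by rw [e3.deriv_eq]; simp
  linarith

lemma eps_pos {n : ℕ} (hn : 4 ≤ n) : 0 < eps n := by
  have : (4:ℝ) ≤ n := by exact_mod_cast hn
  unfold eps
  apply div_pos <;> linarith

lemma eps_le {n : ℕ} (hn : 4 ≤ n) : eps n ≤ 1 / 3 := by
  have : (4:ℝ) ≤ n := by exact_mod_cast hn
  unfold eps
  apply one_div_le_one_div_of_le <;> linarith

lemma del_eq {n : ℕ} (hn : 4 ≤ n) : del n = 1 + 3 * eps n := by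
  have : (4:ℝ) ≤ n := by exact_mod_cast hn
  have h : (n:ℝ) - 1 ≠ 0 := by linarith
  unfold eps del
  field_simp
  ring

lemma kap_pos : 0 < kap := by
  unfold kap
  have := Real.pi_pos
  positivity

lemma lam_pos {n : ℕ} (hn : 4 ≤ n) : 0 < lam n := by
  have h1 := eps_pos hn
  have h2 := del_eq hn
  have h3 := kap_pos
  unfold lam
  have : 0 < del n := by linarith
  positivity

lemma mu1_upper {y : ℝ} (hy : 0 ≤ y) : mu1 y ≤ kap * y := by
  have h : (∫ σ in (0:ℝ)..(y / 2), Real.exp (-σ ^ 2)) ≤ ∫ σ in (0:ℝ)..(y / 2), (1:ℝ) := by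
    apply intervalIntegral.integral_mono_on (by positivity)
    · exact (by fun_prop : Continuous fun σ : ℝ => Real.exp (-σ ^ 2)).intervalIntegrable _ _
    · simp
    · intro x _
      rw [Real.exp_le_one_iff]
      nlinarith [sq_nonneg x]
  rw [intervalIntegral.integral_const] at h
  have hk := kap_pos
  have : mu1 y = 2 * kap * ∫ σ in (0:ℝ)..(y / 2), Real.exp (-σ ^ 2) := by
    unfold mu1 kap; ring
  rw [this]
  calc _ ≤ 2 * kap * ((y / 2 - 0) • (1:ℝ)) := by gcongr
    _ = _ := by simp; ring

lemma mu1_lower {y : ℝ} (hy : 0 ≤ y) : kap * y * Real.exp (-y ^ 2 / 4) ≤ mu1 y := by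
  have h : (∫ σ in (0:ℝ)..(y / 2), Real.exp (-y ^ 2 / 4)) ≤
      ∫ σ in (0:ℝ)..(y / 2), Real.exp (-σ ^ 2) := by
    apply intervalIntegral.integral_mono_on (by positivity)
    · simp
    · exact (by fun_prop : Continuous fun σ : ℝ => Real.exp (-σ ^ 2)).intervalIntegrable _ _
    · intro x hx
      rw [Real.exp_le_exp]
      nlinarith [hx.1, hx.2]
  rw [intervalIntegral.integral_const] at h
  have hk := kap_pos
  have : mu1 y = 2 * kap * ∫ σ in (0:ℝ)..(y / 2), Real.exp (-σ ^ 2) := by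
    unfold mu1 kap; ring
  rw [this]
  calc _ = 2 * kap * ((y / 2 - 0) • Real.exp (-y ^ 2 / 4)) := by simp; ring
    _ ≤ _ := by gcongr

lemma mu1_pos {y : ℝ} (hy : 0 < y) : 0 < mu1 y := by
  have := mu1_lower hy.le
  have hk := kap_pos
  have : 0 < kap * y * Real.exp (-y ^ 2 / 4) := by positivity
  linarith

lemma mu1_cont : Continuous mu1 := by
  unfold mu1
  have h : Continuous fun x : ℝ => ∫ σ in (0:ℝ)..x, Real.exp (-σ ^ 2) :=
    intervalIntegral.continuous_primitive
      (fun a b => (by fun_prop : Continuous fun σ : ℝ => Real.exp (-σ ^ 2)).intervalIntegrable a b) 0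
  exact continuous_const.mul (h.comp (continuous_id.div_const 2))

set_option maxHeartbeats 2000000 in
/-- A positive slowly decaying supersolution of the linear operator. -/
lemma slow_super {e : ℝ} (he : 0 < e) (he3 : e ≤ 1 / 3) :
    ∃ p p1 p2 : ℝ → ℝ, (∀ y, HasDerivAt p (p1 y) y) ∧ (∀ y, HasDerivAt p1 (p2 y) y) ∧
      (∀ y, p2 y + y / 2 * p1 y + e * p y ≤ 0) ∧ (∀ y, 0 < p y) ∧
      (∀ y, 1 ≤ y → 1 / 2 ≤ y ^ (2 * e) * p y) := by
  set N : ℝ := 216 * Real.exp 9 with hN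
  have hz : ∀ y : ℝ, 0 < 1 + y ^ 2 := fun y => by positivity
  have hR : ∀ y : ℝ, HasDerivAt (fun y : ℝ => (1 + y ^ 2) ^ (-e))
      (-2 * e * y * (1 + y ^ 2) ^ (-e) / (1 + y ^ 2)) y := by
    intro y
    have h1 : HasDerivAt (fun y : ℝ => 1 + y ^ 2) (2 * y) y := by
      simpa using (hasDerivAt_pow 2 y).const_add 1
    have h2 := h1.rpow_const (p := -e) (Or.inl (hz y).ne')
    convert h2 using 1
    rw [Real.rpow_sub_one (hz y).ne']
    ring
  have hZ : ∀ y : ℝ, HasDerivAt (fun y : ℝ => 1 + y ^ 2) (2 * y) y := by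
    intro y
    simpa using (hasDerivAt_pow 2 y).const_add 1
  have hG : ∀ y : ℝ, HasDerivAt (fun y : ℝ => Real.exp (-y ^ 2 / 4))
      (-y / 2 * Real.exp (-y ^ 2 / 4)) y := by
    intro y
    have h1 : HasDerivAt (fun y : ℝ => -y ^ 2 / 4) (-y / 2) y := by
      have := ((hasDerivAt_pow 2 y).neg).div_const 4
      refine this.congr_deriv ?_
      norm_num; ring
    convert h1.exp using 1
    ring
  refine ⟨fun y => (1 + y ^ 2) ^ (-e) + 3 * ((1 + y ^ 2) ^ (-e) / (1 + y ^ 2))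
      + N * Real.exp (-y ^ 2 / 4),
    fun y => -2 * e * y * (1 + y ^ 2) ^ (-e) / (1 + y ^ 2)
      - 6 * (e + 1) * y * (1 + y ^ 2) ^ (-e) / (1 + y ^ 2) ^ 2
      + N * (-y / 2 * Real.exp (-y ^ 2 / 4)),
    fun y => -2 * e * (1 + y ^ 2) ^ (-e) / (1 + y ^ 2)
      + 4 * e * (e + 1) * y ^ 2 * (1 + y ^ 2) ^ (-e) / (1 + y ^ 2) ^ 2
      - 6 * (e + 1) * (1 + y ^ 2) ^ (-e) / (1 + y ^ 2) ^ 2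
      + 12 * (e + 1) * (e + 2) * y ^ 2 * (1 + y ^ 2) ^ (-e) / (1 + y ^ 2) ^ 3
      + N * ((-1 / 2 + y ^ 2 / 4) * Real.exp (-y ^ 2 / 4)), ?_, ?_, ?_, ?_, ?_⟩
  · intro y
    have h0 := (hz y).ne'
    have := ((hR y).add (((hR y).div (hZ y) h0).const_mul 3)).add ((hG y).const_mul N)
    refine this.congr_deriv ?_
    field_simp
    ring
  · intro y
    have h0 := (hz y).ne'
    have a1 := (((hasDerivAt_id y).const_mul (-2 * e)).mul (hR y)).div (hZ y) h0
    have a2 := (((hasDerivAt_id y).const_mul (6 * (e + 1))).mul (hR y)).div ((hZ y).pow 2) (pow_ne_zero 2 h0)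
    have a3 := (((hasDerivAt_id y).neg.div_const 2).mul (hG y)).const_mul N
    have := (a1.sub a2).add a3
    refine this.congr_deriv ?_
    simp only [id, Pi.mul_apply, Pi.neg_apply, Pi.pow_apply]
    field_simp
    ring
  · intro y
    set z := 1 + y ^ 2 with hzd
    have hz1 : 1 ≤ z := by rw [hzd]; nlinarith [sq_nonneg y]
    have hzp : 0 < z := by linarith
    set R := z ^ (-e) with hRd
    have hRp : 0 < R := Real.rpow_pos_of_pos hzp _
    have hR1 : R ≤ 1 := Real.rpow_le_one_of_one_le_of_nonpos hz1 (by linarith)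
    set G := Real.exp (-y ^ 2 / 4) with hGd
    have hGp : 0 < G := Real.exp_pos _
    have hNp : 0 < N := by positivity
    have hyz : y ^ 2 = z - 1 := by rw [hzd]; ring
    have key : (-2 * e * R / z + 4 * e * (e + 1) * y ^ 2 * R / z ^ 2
      - 6 * (e + 1) * R / z ^ 2
      + 12 * (e + 1) * (e + 2) * y ^ 2 * R / z ^ 3
      + N * ((-1 / 2 + y ^ 2 / 4) * G)) + y / 2 * (-2 * e * y * R / z
      - 6 * (e + 1) * y * R / z ^ 2
      + N * (-y / 2 * G)) + e * (R + 3 * (R / z) + N * G)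
      = R / z * (e * (-1 + 4 * (e + 1) * (1 - 1 / z)) - 3)
        + 3 * (e + 1) * (R / z ^ 2) * (-1 + 4 * (e + 2) * (1 - 1 / z)) - N * (1 / 2 - e) * G := by
      have : y / 2 * (-2 * e * y * R / z
        - 6 * (e + 1) * y * R / z ^ 2
        + N * (-y / 2 * G)) = -e * y ^ 2 * R / z - 3 * (e + 1) * y ^ 2 * R / z ^ 2
        - N * (y ^ 2 / 4 * G) := by ring
      rw [this, hyz]
      field_simp
      ring
    rw [key]
    have hi : 0 < 1 / z := by positivity
    have b1 : e * (-1 + 4 * (e + 1) * (1 - 1 / z)) - 3 ≤ -1 := by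
      have : 4 * (e + 1) * (1 - 1 / z) ≤ 4 * (e + 1) * 1 := by gcongr; linarith
      nlinarith
    have b2 : 3 * (e + 1) * (-1 + 4 * (e + 2) * (1 - 1 / z)) ≤ 36 := by
      have : 4 * (e + 2) * (1 - 1 / z) ≤ 4 * (e + 2) * 1 := by gcongr; linarith
      have h2 : 3 * (e + 1) * (-1 + 4 * (e + 2) * (1 - 1 / z)) ≤ 3 * (e + 1) * (-1 + 4 * (e + 2) * 1) := by
        gcongr
      nlinarith
    have c1 : R / z * (e * (-1 + 4 * (e + 1) * (1 - 1 / z)) - 3) ≤ R / z * (-1) := by gcongr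
    have c2 : 3 * (e + 1) * (R / z ^ 2) * (-1 + 4 * (e + 2) * (1 - 1 / z)) ≤ 36 * (R / z ^ 2) := by
      have : 3 * (e + 1) * (R / z ^ 2) * (-1 + 4 * (e + 2) * (1 - 1 / z)) =
        3 * (e + 1) * (-1 + 4 * (e + 2) * (1 - 1 / z)) * (R / z ^ 2) := by ring
      rw [this]; gcongr
    have c3 : N / 6 * G ≤ N * (1 / 2 - e) * G := by
      have : N / 6 ≤ N * (1 / 2 - e) := by nlinarith
      gcongr
    suffices hs : -(R / z) + 36 * (R / z ^ 2) - N / 6 * G ≤ 0 by linarith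
    by_cases hc : 36 ≤ z
    · have : 36 * (R / z ^ 2) ≤ R / z := by
        rw [show 36 * (R / z ^ 2) = 36 / z * (R / z) by field_simp]
        have : 36 / z ≤ 1 := by rw [div_le_one hzp]; exact hc
        have hp : 0 < R / z := by positivity
        nlinarith
      have : 0 < N / 6 * G := by positivity
      linarith
    · push Not at hc
      have g1 : Real.exp (-9) ≤ G := by
        rw [hGd, Real.exp_le_exp]; nlinarith
      have g2 : N / 6 * Real.exp (-9) = 36 := by
        rw [hN, Real.exp_neg]; field_simp; norm_num
      have g3 : N / 6 * Real.exp (-9) ≤ N / 6 * G := by gcongr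
      have g4 : R / z ^ 2 ≤ 1 := by
        rw [div_le_one (by positivity)]; nlinarith
      have : 0 < R / z := by positivity
      linarith
  · intro y
    have := hz y
    have : 0 < N := by positivity
    positivity
  · intro y hy
    have hy0 : 0 < y := by linarith
    have h1 : y ^ (2 * e) * (1 + y ^ 2) ^ (-e) = (y ^ 2 / (1 + y ^ 2)) ^ e := by
      rw [Real.div_rpow (by positivity) (by positivity), Real.rpow_neg (by positivity),
        Real.rpow_mul hy0.le]
      simp [div_eq_mul_inv]
    have h2 : (1 / 2 : ℝ) ≤ y ^ 2 / (1 + y ^ 2) := by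
      rw [div_le_div_iff₀ (by norm_num) (hz y)]; nlinarith
    have h3 : (1 / 2 : ℝ) ≤ (1 / 2 : ℝ) ^ e := by
      conv_lhs => rw [← Real.rpow_one (1 / 2 : ℝ)]
      exact Real.rpow_le_rpow_of_exponent_ge (by norm_num) (by norm_num) (by linarith)
    have h4 : (1 / 2 : ℝ) ^ e ≤ (y ^ 2 / (1 + y ^ 2)) ^ e :=
      Real.rpow_le_rpow (by norm_num) h2 he.le
    have h5 : 0 < N := by positivity
    have h6 : 0 ≤ y ^ (2 * e) * (3 * ((1 + y ^ 2) ^ (-e) / (1 + y ^ 2))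
      + N * Real.exp (-y ^ 2 / 4)) := by positivity
    have : y ^ (2 * e) * ((1 + y ^ 2) ^ (-e) + 3 * ((1 + y ^ 2) ^ (-e) / (1 + y ^ 2))
      + N * Real.exp (-y ^ 2 / 4)) = y ^ (2 * e) * (1 + y ^ 2) ^ (-e) +
      y ^ (2 * e) * (3 * ((1 + y ^ 2) ^ (-e) / (1 + y ^ 2)) + N * Real.exp (-y ^ 2 / 4)) := by ring
    rw [this, h1]; linarith

lemma profile_derivs {n : ℕ} {u : ℝ → ℝ} (h : IsDiffusiveProfile n u) {y : ℝ} (hy : 0 < y) :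
    HasDerivAt u (deriv u y) y ∧ HasDerivAt (deriv u) (deriv (deriv u) y) y := by
  have h2 : ContDiffOn ℝ (1 + 1) u (Set.Ioi 0) := h.1
  rw [contDiffOn_succ_iff_deriv_of_isOpen isOpen_Ioi] at h2
  have hm : Set.Ioi (0:ℝ) ∈ nhds y := Ioi_mem_nhds hy
  refine ⟨(h2.1.differentiableAt hm).hasDerivAt, ?_⟩
  exact ((h2.2.2.differentiableOn one_ne_zero).differentiableAt hm).hasDerivAt

lemma profile_le_add {n : ℕ} (hn : 4 ≤ n) {u w : ℝ → ℝ} (hu : IsDiffusiveProfile n u)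
    (hw : IsDiffusiveProfile n w) {p p1 p2 : ℝ → ℝ} (hp1 : ∀ y, HasDerivAt p (p1 y) y)
    (hp2 : ∀ y, HasDerivAt p1 (p2 y) y)
    (hp : ∀ y, p2 y + y / 2 * p1 y + eps n * p y ≤ 0) (hpos : ∀ y, 0 < p y)
    (hinf : ∀ y, 1 ≤ y → 1 / 2 ≤ y ^ (2 * eps n) * p y) {s : ℝ} (hs : 0 < s) {y : ℝ} (hy : 0 < y) :
    u y ≤ w y + s * p y := by
  by_contra hc
  push Not at hc
  obtain ⟨_, hup, huo, hu0, hui⟩ := id hu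
  obtain ⟨_, hwp, hwo, hw0, hwi⟩ := id hw
  have hlam := lam_pos hn
  have hdel : 0 < del n := by rw [del_eq hn]; have := eps_pos hn; linarith
  set F : ℝ → ℝ := fun x => w x + s * p x with hF
  have hFp : ∀ x, 0 < x → 0 < F x := fun x hx => by
    have := hwp x hx; have := hpos x; simp only [hF]; positivity
  have hpc : Continuous p := continuous_iff_continuousAt.2 fun x => (hp1 x).continuousAt
  set r : ℝ → ℝ := fun x => u x / F x with hr
  have hry : 1 < r y := by
    simp only [hr]; rw [lt_div_iff₀ (hFp y hy)]; simpa [hF] using hc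
  have ucont : ∀ x, 0 < x → ContinuousAt u x := fun x hx => (profile_derivs hu hx).1.continuousAt
  have wcont : ∀ x, 0 < x → ContinuousAt w x := fun x hx => (profile_derivs hw hx).1.continuousAt
  -- limit at zero
  have l0 : Filter.Tendsto r (nhdsWithin 0 (Set.Ioi 0)) (nhds 1) := by
    have a0 : Filter.Tendsto (fun x : ℝ => x ^ del n) (nhdsWithin 0 (Set.Ioi 0)) (nhds 0) := by
      have : ContinuousAt (fun x : ℝ => x ^ del n) 0 :=
        Real.continuousAt_rpow_const _ _ (Or.inr hdel.le)
      have h2 := this.tendsto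
      rw [Real.zero_rpow hdel.ne'] at h2
      exact h2.mono_left nhdsWithin_le_nhds
    have a1 : Filter.Tendsto p (nhdsWithin 0 (Set.Ioi 0)) (nhds (p 0)) :=
      (hpc.tendsto 0).mono_left nhdsWithin_le_nhds
    have a2 : Filter.Tendsto (fun x : ℝ => (x ^ del n * u x) / (x ^ del n * w x + s * (x ^ del n * p x)))
        (nhdsWithin 0 (Set.Ioi 0)) (nhds (lam n / (lam n + s * (0 * p 0)))) :=
      hu0.div (hw0.add ((a0.mul a1).const_mul s)) (by simp; exact hlam.ne')
    have : lam n / (lam n + s * (0 * p 0)) = 1 := by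
      simp; exact hlam.ne'
    rw [this] at a2
    refine a2.congr' ?_
    filter_upwards [self_mem_nhdsWithin] with x hx
    have hx' : 0 < x := hx
    have : 0 < x ^ del n := Real.rpow_pos_of_pos hx' _
    have h3 := (hFp x hx').ne'
    simp only [hr, hF] at h3 ⊢
    rw [show x ^ del n * w x + s * (x ^ del n * p x) = x ^ del n * (w x + s * p x) by ring]
    rw [mul_div_mul_left _ _ this.ne']
  have e0 := l0.eventually (gt_mem_nhds hry)
  -- behaviour at infinity
  have e1 : ∀ᶠ x in Filter.atTop, r x < r y := by
    have : ∀ᶠ x in Filter.atTop, x ^ (2 * eps n) * u x < s / 2 :=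
      hui.eventually (gt_mem_nhds (by positivity))
    filter_upwards [this, Filter.eventually_ge_atTop 1] with x hx hx1
    have hx0 : 0 < x := by linarith
    refine lt_trans ?_ hry
    simp only [hr]
    rw [div_lt_one (hFp x hx0)]
    have hq : 0 < x ^ (2 * eps n) := Real.rpow_pos_of_pos hx0 _
    have h3 : s / 2 ≤ x ^ (2 * eps n) * F x := by
      simp only [hF]
      have := hinf x hx1
      have := hwp x hx0
      have h4 : 0 < x ^ (2 * eps n) * w x := by positivity
      nlinarith
    exact lt_of_mul_lt_mul_left (hx.trans_le h3) hq.le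
  obtain ⟨a, ha, hab⟩ : ∃ a, 0 < a ∧ ∀ x, 0 < x → x < a → r x < r y := by
    rw [eventually_nhdsWithin_iff, Metric.eventually_nhds_iff] at e0
    obtain ⟨a, ha, h⟩ := e0
    refine ⟨a, ha, fun x hx hxa => h ?_ hx⟩
    simp [abs_of_pos hx, hxa]
  obtain ⟨b, hb⟩ := Filter.eventually_atTop.1 e1
  have hya : a ≤ y := by
    by_contra h; push Not at h; exact lt_irrefl _ (hab y hy h)
  have hyb : y ≤ b := by
    by_contra h; push Not at h; exact lt_irrefl _ (hb y h.le)
  have rc : ContinuousOn r (Set.Icc a b) := by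
    intro x hx
    have hx0 : 0 < x := lt_of_lt_of_le ha hx.1
    exact ((ucont x hx0).div ((wcont x hx0).add (continuousAt_const.mul hpc.continuousAt))
      (hFp x hx0).ne').continuousWithinAt
  obtain ⟨c, hcm, hcmax⟩ := isCompact_Icc.exists_isMaxOn ⟨y, hya, hyb⟩ rc
  have hc0 : 0 < c := lt_of_lt_of_le ha hcm.1
  have hrc : r y ≤ r c := hcmax ⟨hya, hyb⟩
  have hmax : ∀ x, 0 < x → r x ≤ r c := by
    intro x hx
    by_cases h1 : x < a
    · exact (hab x hx h1).le.trans hrc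
    by_cases h2 : b ≤ x
    · exact (hb x h2).le.trans hrc
    push Not at h1 h2
    exact hcmax ⟨h1, h2.le⟩
  set θ := r c with hθ
  have hθ1 : 1 < θ := hry.trans_le hrc
  have huc : u c = θ * F c := by
    simp only [hθ, hr]; rw [div_mul_cancel₀ _ (hFp c hc0).ne']
  have hle : ∀ x, 0 < x → u x ≤ θ * F x := by
    intro x hx
    have := hmax x hx
    simp only [hr] at this
    rwa [div_le_iff₀ (hFp x hx)] at this
  have hd1 : ∀ x, 0 < x → HasDerivAt (fun x => u x - θ * F x)
      (deriv u x - θ * (deriv w x + s * p1 x)) x := fun x hx =>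
    (profile_derivs hu hx).1.sub (((profile_derivs hw hx).1.add ((hp1 x).const_mul s)).const_mul θ)
  have hd2 : HasDerivAt (fun x => deriv u x - θ * (deriv w x + s * p1 x))
      (deriv (deriv u) c - θ * (deriv (deriv w) c + s * p2 c)) c :=
    (profile_derivs hu hc0).2.sub
      (((profile_derivs hw hc0).2.add ((hp2 c).const_mul s)).const_mul θ)
  have hlm : IsLocalMax (fun x => u x - θ * F x) c := by
    filter_upwards [Ioi_mem_nhds hc0] with x hx
    have := hle x hx
    rw [huc]; linarith
  have hz1 := hlm.hasDerivAt_eq_zero (hd1 c hc0)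
  have hz2 := second_deriv_nonpos (by filter_upwards [Ioi_mem_nhds hc0] with x hx using hd1 x hx)
    hd2 hlm
  have o1 := huo c hc0
  have o2 := hwo c hc0
  have o3 := hp c
  have hQ := mu1_pos hc0
  have hFc := hFp c hc0
  have hwc := hwp c hc0
  have m1 : (2 * mu1 c * w c) ^ n ≤ (2 * mu1 c * F c) ^ n := by
    have : w c ≤ F c := by simp only [hF]; have := mul_pos hs (hpos c); linarith
    gcongr
  have m2 : (2 * mu1 c * u c) ^ n = θ ^ n * (2 * mu1 c * F c) ^ n := by
    rw [huc, ← mul_pow]; ring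
  have m3 : θ < θ ^ n := by
    conv_lhs => rw [← pow_one θ]
    exact pow_lt_pow_right₀ hθ1 (by omega)
  have m4 : 0 < (2 * mu1 c * F c) ^ n := by positivity
  have key : (2 * mu1 c * u c) ^ n - θ * ((2 * mu1 c * w c) ^ n
      + s * (p2 c + c / 2 * p1 c + eps n * p c)) ≤ 0 := by
    rw [← o1, ← o2]
    have e : deriv (deriv u) c + c / 2 * deriv u c + eps n * u c -
      θ * (deriv (deriv w) c + c / 2 * deriv w c + eps n * w c +
        s * (p2 c + c / 2 * p1 c + eps n * p c)) =
      (deriv (deriv u) c - θ * (deriv (deriv w) c + s * p2 c)) +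
      c / 2 * (deriv u c - θ * (deriv w c + s * p1 c)) + eps n * (u c - θ * F c) := by
      simp only [hF]; ring
    rw [e, hz1, huc]; simp; simpa using hz2
  have k2 : θ * ((2 * mu1 c * w c) ^ n + s * (p2 c + c / 2 * p1 c + eps n * p c)) ≤
      θ * (2 * mu1 c * F c) ^ n := by
    have : s * (p2 c + c / 2 * p1 c + eps n * p c) ≤ 0 := by nlinarith
    have hθ0 : 0 ≤ θ := by linarith
    apply mul_le_mul_of_nonneg_left _ hθ0
    linarith
  have k3 : θ * (2 * mu1 c * F c) ^ n < θ ^ n * (2 * mu1 c * F c) ^ n := by gcongr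
  linarith

lemma profile_le {n : ℕ} (hn : 4 ≤ n) {u w : ℝ → ℝ} (hu : IsDiffusiveProfile n u)
    (hw : IsDiffusiveProfile n w) {y : ℝ} (hy : 0 < y) : u y ≤ w y := by
  obtain ⟨p, p1, p2, h1, h2, h3, h4, h5⟩ := slow_super (eps_pos hn) (eps_le hn)
  apply le_of_forall_pos_le_add
  intro t ht
  have := profile_le_add hn hu hw h1 h2 h3 h4 h5 (div_pos ht (h4 y)) hy
  rwa [div_mul_cancel₀ _ (h4 y).ne'] at this

open MeasureTheory in
/-- Knaster-Tarski fixed point between an integral sub- and supersolution. -/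
lemma fixpoint_exists (A : ℝ → ℝ) (g : ℝ → ℝ → ℝ) (V0 V1 : ℝ → ℝ)
    (hA : ContinuousOn A (Set.Ioi 0)) (hApos : ∀ t, 0 < t → 0 < A t)
    (hg : ∀ v : ℝ → ℝ, ContinuousOn v (Set.Ioi 0) →
      ContinuousOn (fun t => g t (v t)) (Set.Ioi 0))
    (hgm : ∀ t, 0 < t → MonotoneOn (g t) (Set.Icc 0 (V1 t)))
    (hg0 : ∀ t, 0 < t → 0 ≤ g t 0)
    (hV0 : ∀ t, 0 < t → 0 ≤ V0 t) (hV01 : ∀ t, 0 < t → V0 t ≤ V1 t)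
    (hfin : ∀ s, 0 < s → ∫⁻ t in Set.Ioi s, ENNReal.ofReal (g t (V1 t)) ≠ ⊤)
    (hsub : ∀ y, 0 < y → ENNReal.ofReal (V0 y) ≤ ∫⁻ s in Set.Ioc 0 y,
      ENNReal.ofReal (A s) * ∫⁻ t in Set.Ioi s, ENNReal.ofReal (g t (V0 t)))
    (hsup : ∀ y, 0 < y → ∫⁻ s in Set.Ioc 0 y,
      ENNReal.ofReal (A s) * ∫⁻ t in Set.Ioi s, ENNReal.ofReal (g t (V1 t)) ≤
        ENNReal.ofReal (V1 y)) :
    ∃ v h : ℝ → ℝ, ∀ y, 0 < y → HasDerivAt v (A y * h y) y ∧ HasDerivAt h (-(g y (v y))) y ∧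
      V0 y ≤ v y ∧ v y ≤ V1 y := by
  set F : ℝ → ENNReal → ENNReal := fun t x =>
    ENNReal.ofReal (g t (min x (ENNReal.ofReal (V1 t))).toReal) with hF
  have hV1 : ∀ t, 0 < t → 0 ≤ V1 t := fun t ht => (hV0 t ht).trans (hV01 t ht)
  have hmem : ∀ t, 0 < t → ∀ x : ENNReal,
      (min x (ENNReal.ofReal (V1 t))).toReal ∈ Set.Icc 0 (V1 t) := by
    intro t ht x
    refine ⟨ENNReal.toReal_nonneg, ?_⟩
    have := ENNReal.toReal_mono ENNReal.ofReal_ne_top (min_le_right x (ENNReal.ofReal (V1 t)))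
    rwa [ENNReal.toReal_ofReal (hV1 t ht)] at this
  have hFm : ∀ t, 0 < t → Monotone (F t) := by
    intro t ht x x' hxx
    apply ENNReal.ofReal_le_ofReal
    apply hgm t ht (hmem t ht x) (hmem t ht x')
    apply ENNReal.toReal_mono
    · exact ne_top_of_le_ne_top ENNReal.ofReal_ne_top (min_le_right _ _)
    · exact min_le_min_right _ hxx
  have hFval : ∀ t, 0 < t → ∀ x : ℝ, 0 ≤ x → x ≤ V1 t →
      F t (ENNReal.ofReal x) = ENNReal.ofReal (g t x) := by
    intro t ht x hx hx1
    simp only [hF]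
    rw [min_eq_left (ENNReal.ofReal_le_ofReal hx1), ENNReal.toReal_ofReal hx]
  have hFle : ∀ t, 0 < t → ∀ x, F t x ≤ ENNReal.ofReal (g t (V1 t)) := by
    intro t ht x
    apply ENNReal.ofReal_le_ofReal
    exact hgm t ht (hmem t ht x) ⟨hV1 t ht, le_rfl⟩ (hmem t ht x).2
  set Hf : (ℝ → ENNReal) → ℝ → ENNReal := fun w s => ∫⁻ t in Set.Ioi s, F t (w t) with hHf
  set T : (ℝ → ENNReal) → ℝ → ENNReal := fun w y =>
    ∫⁻ s in Set.Ioc 0 y, ENNReal.ofReal (A s) * Hf w s with hT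
  have hHle : ∀ w s, 0 < s → Hf w s ≤ ∫⁻ t in Set.Ioi s, ENNReal.ofReal (g t (V1 t)) := by
    intro w s hs
    apply setLIntegral_mono' measurableSet_Ioi
    intro t ht
    exact hFle t (hs.trans ht) _
  have hTm : Monotone T := by
    intro w w' hww y
    apply setLIntegral_mono' measurableSet_Ioc
    intro s hs
    gcongr
    apply setLIntegral_mono' measurableSet_Ioi
    intro t ht
    exact hFm t (hs.1.trans ht) (hww t)
  set f : (ℝ → ENNReal) →o (ℝ → ENNReal) := ⟨T, hTm⟩ with hf
  set w := f.gfp with hw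
  have hfix : T w = w := f.map_gfp
  have hTle : ∀ y, 0 < y → w y ≤ ENNReal.ofReal (V1 y) := by
    intro y hy
    rw [← hfix]
    refine le_trans ?_ (hsup y hy)
    apply setLIntegral_mono' measurableSet_Ioc
    intro s hs
    gcongr
    exact hHle w s hs.1
  have hlow : ∀ y, 0 < y → ENNReal.ofReal (V0 y) ≤ w y := by
    have : (fun y => if 0 < y then ENNReal.ofReal (V0 y) else 0) ≤ w := by
      apply f.le_gfp
      intro y
      by_cases hy : 0 < y
      · simp only [hy, if_true]
        refine (hsub y hy).trans ?_
        apply setLIntegral_mono' measurableSet_Ioc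
        intro s hs
        gcongr
        apply setLIntegral_mono' measurableSet_Ioi
        intro t ht
        have ht0 : 0 < t := hs.1.trans ht
        simp only [ht0, if_true]
        rw [hFval t ht0 _ (hV0 t ht0) (hV01 t ht0)]
      · simp [hy]
    intro y hy
    have := this y
    simpa [hy] using this
  set v : ℝ → ℝ := fun y => (w y).toReal with hv
  set h : ℝ → ℝ := fun s => (Hf w s).toReal with hh
  have hwfin : ∀ y, 0 < y → w y ≠ ⊤ := fun y hy =>
    ne_top_of_le_ne_top ENNReal.ofReal_ne_top (hTle y hy)
  have hHfin : ∀ s, 0 < s → Hf w s ≠ ⊤ := fun s hs =>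
    ne_top_of_le_ne_top (hfin s hs) (hHle w s hs)
  have hHanti : Antitone (Hf w) := fun a b hab =>
    lintegral_mono_set (Set.Ioi_subset_Ioi hab)
  have hHmeas : Measurable h := hHanti.measurable.ennreal_toReal
  have hvlow : ∀ y, 0 < y → V0 y ≤ v y := by
    intro y hy
    have := ENNReal.toReal_mono (hwfin y hy) (hlow y hy)
    rwa [ENNReal.toReal_ofReal (hV0 y hy)] at this
  have hvup : ∀ y, 0 < y → v y ≤ V1 y := by
    intro y hy
    have := ENNReal.toReal_mono ENNReal.ofReal_ne_top (hTle y hy)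
    rwa [ENNReal.toReal_ofReal (hV1 y hy)] at this
  have hwv : ∀ y, 0 < y → w y = ENNReal.ofReal (v y) := fun y hy =>
    (ENNReal.ofReal_toReal (hwfin y hy)).symm
  have hHh : ∀ s, 0 < s → Hf w s = ENNReal.ofReal (h s) := fun s hs =>
    (ENNReal.ofReal_toReal (hHfin s hs)).symm
  have hh0 : ∀ s, 0 ≤ h s := fun s => ENNReal.toReal_nonneg
  have hv0 : ∀ s, 0 ≤ v s := fun s => ENNReal.toReal_nonneg
  -- v as an integral
  have hprod : ∀ y, ∫⁻ s in Set.Ioc 0 y, ENNReal.ofReal (A s * h s) = T w y := by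
    intro y
    apply setLIntegral_congr_fun measurableSet_Ioc
    intro s hs
    simp only
    rw [ENNReal.ofReal_mul (hApos s hs.1).le, hHh s hs.1]
  have hmeas : ∀ y, AEStronglyMeasurable (fun s => A s * h s) (volume.restrict (Set.Ioc 0 y)) := by
    intro y
    apply AEStronglyMeasurable.mul
    · exact (hA.mono fun s hs => hs.1).aestronglyMeasurable measurableSet_Ioc
    · exact hHmeas.aestronglyMeasurable
  have hnn : ∀ y, 0 ≤ᵐ[volume.restrict (Set.Ioc 0 y)] fun s => A s * h s := by
    intro y
    rw [Filter.EventuallyLE, ae_restrict_iff' measurableSet_Ioc]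
    filter_upwards with s hs
    exact mul_nonneg (hApos s hs.1).le (hh0 s)
  have hAhInt : ∀ y, 0 < y → IntegrableOn (fun s => A s * h s) (Set.Ioc 0 y) := by
    intro y hy
    refine ⟨hmeas y, ?_⟩
    rw [hasFiniteIntegral_iff_ofReal (hnn y), hprod y, hfix]
    exact (hwfin y hy).lt_top
  have hvint : ∀ y, 0 < y → v y = ∫ s in (0:ℝ)..y, A s * h s := by
    intro y hy
    rw [intervalIntegral.integral_of_le hy.le, integral_eq_lintegral_of_nonneg_ae (hnn y) (hmeas y),
      hprod y, hfix]
  have hii : ∀ y, 0 < y → IntervalIntegrable (fun s => A s * h s) volume 0 y := by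
    intro y hy
    rw [intervalIntegrable_iff_integrableOn_Ioc_of_le hy.le]
    exact hAhInt y hy
  have hvc : ContinuousOn v (Set.Ioi 0) := by
    intro y hy
    have hy0 : 0 < y := hy
    have h2y : 0 < 2 * y := by linarith
    have c1 := intervalIntegral.continuousOn_primitive_interval' (hii (2 * y) h2y)
      (a := 0) Set.left_mem_uIcc
    have c2 : ContinuousAt (fun b => ∫ s in (0:ℝ)..b, A s * h s) y := by
      apply c1.continuousAt
      rw [Set.uIcc_of_le h2y.le]
      exact Icc_mem_nhds hy0 (by linarith)
    refine (c2.congr ?_).continuousWithinAt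
    filter_upwards [Ioi_mem_nhds hy0] with x hx
    exact (hvint x hx).symm
  have hGc := hg v hvc
  have hGnn : ∀ t, 0 < t → 0 ≤ g t (v t) := fun t ht =>
    (hg0 t ht).trans (hgm t ht ⟨le_rfl, hV1 t ht⟩ ⟨hv0 t, hvup t ht⟩ (hv0 t))
  have hHG : ∀ s, 0 < s → ∫⁻ t in Set.Ioi s, ENNReal.ofReal (g t (v t)) = Hf w s := by
    intro s hs
    apply setLIntegral_congr_fun measurableSet_Ioi
    intro t ht
    have ht0 : 0 < t := hs.trans ht
    simp only
    rw [hwv t ht0, hFval t ht0 _ (hv0 t) (hvup t ht0)]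
  have hGm : ∀ s, 0 < s → AEStronglyMeasurable (fun t => g t (v t)) (volume.restrict (Set.Ioi s)) :=
    fun s hs => (hGc.mono (Set.Ioi_subset_Ioi hs.le)).aestronglyMeasurable measurableSet_Ioi
  have hGae : ∀ s, 0 < s → 0 ≤ᵐ[volume.restrict (Set.Ioi s)] fun t => g t (v t) := by
    intro s hs
    rw [Filter.EventuallyLE, ae_restrict_iff' measurableSet_Ioi]
    filter_upwards with t ht
    exact hGnn t (hs.trans ht)
  have hGint : ∀ s, 0 < s → IntegrableOn (fun t => g t (v t)) (Set.Ioi s) := by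
    intro s hs
    refine ⟨hGm s hs, ?_⟩
    rw [hasFiniteIntegral_iff_ofReal (hGae s hs), hHG s hs]
    exact (hHfin s hs).lt_top
  have hTailInt : ∀ s, 0 < s → h s = ∫ t in Set.Ioi s, g t (v t) := by
    intro s hs
    rw [integral_eq_lintegral_of_nonneg_ae (hGae s hs) (hGm s hs), hHG s hs]
  have hhd : ∀ y, 0 < y → HasDerivAt h (-(g y (v y))) y := by
    intro y hy
    have hy2 : 0 < y / 2 := by linarith
    have e : ∀ x, y / 2 < x → h x = h (y / 2) - ∫ t in (y / 2)..x, g t (v t) := by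
      intro x hx
      rw [hTailInt x (hy2.trans hx), hTailInt _ hy2,
        intervalIntegral.integral_of_le hx.le, ← Set.Ioc_union_Ioi_eq_Ioi hx.le,
        setIntegral_union (Set.Ioc_disjoint_Ioi le_rfl) measurableSet_Ioi
          ((hGint _ hy2).mono_set Set.Ioc_subset_Ioi_self)
          ((hGint _ hy2).mono_set (Set.Ioi_subset_Ioi hx.le))]
      ring
    have d : HasDerivAt (fun x => ∫ t in (y / 2)..x, g t (v t)) (g y (v y)) y := by
      apply intervalIntegral.integral_hasDerivAt_right
      · rw [intervalIntegrable_iff_integrableOn_Ioc_of_le (by linarith)]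
        exact (hGint _ hy2).mono_set Set.Ioc_subset_Ioi_self
      · exact hGc.stronglyMeasurableAtFilter isOpen_Ioi y hy
      · exact hGc.continuousAt (Ioi_mem_nhds hy)
    have d2 := d.const_sub (h (y / 2))
    refine d2.congr_of_eventuallyEq ?_
    filter_upwards [Ioi_mem_nhds (show y / 2 < y by linarith)] with x hx using e x hx
  have hAh : ContinuousOn (fun s => A s * h s) (Set.Ioi 0) :=
    hA.mul fun s hs => (hhd s hs).continuousAt.continuousWithinAt
  refine ⟨v, h, fun y hy => ⟨?_, hhd y hy, hvlow y hy, hvup y hy⟩⟩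
  have d : HasDerivAt (fun x => ∫ s in (0:ℝ)..x, A s * h s) (A y * h y) y := by
    apply intervalIntegral.integral_hasDerivAt_right (hii y hy)
    · exact hAh.stronglyMeasurableAtFilter isOpen_Ioi y hy
    · exact hAh.continuousAt (Ioi_mem_nhds hy)
  refine d.congr_of_eventuallyEq ?_
  filter_upwards [Ioi_mem_nhds hy] with x hx using hvint x hx

open MeasureTheory in
lemma lintegral_tail {q q' : ℝ → ℝ} {s : ℝ} (hq : ∀ x, s ≤ x → HasDerivAt q (-(q' x)) x)
    (hq' : ∀ x, s ≤ x → 0 ≤ q' x) (hl : Filter.Tendsto q Filter.atTop (nhds 0)) :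
    ∫⁻ t in Set.Ioi s, ENNReal.ofReal (q' t) = ENNReal.ofReal (q s) := by
  have hi : IntegrableOn (fun x => -(q' x)) (Set.Ioi s) :=
    integrableOn_Ioi_deriv_of_nonpos' (fun x hx => hq x hx)
      (fun x hx => by have := hq' x (le_of_lt hx); linarith) hl
  have he := integral_Ioi_of_hasDerivAt_of_nonpos' (fun x hx => hq x hx)
      (fun x hx => by have := hq' x (le_of_lt hx); linarith) hl
  rw [integral_neg] at he
  have hi2 : IntegrableOn q' (Set.Ioi s) := by simpa using hi.neg
  rw [← ofReal_integral_eq_lintegral_ofReal hi2]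
  · congr 1; linarith
  · rw [Filter.EventuallyLE, ae_restrict_iff' measurableSet_Ioi]
    filter_upwards with t ht
    exact hq' t (le_of_lt ht)

open MeasureTheory in
lemma lintegral_head {V V' : ℝ → ℝ} {y : ℝ} (hy : 0 < y) (hc : ContinuousOn V (Set.Icc 0 y))
    (hV : ∀ x, 0 < x → HasDerivAt V (V' x) x)
    (hV' : ∀ x, 0 < x → 0 ≤ V' x) (h0 : V 0 = 0) :
    ∫⁻ t in Set.Ioc 0 y, ENNReal.ofReal (V' t) = ENNReal.ofReal (V y) := by
  have hi : IntegrableOn V' (Set.Ioc 0 y) :=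
    intervalIntegral.integrableOn_deriv_of_nonneg hc (fun x hx => hV x hx.1)
      (fun x hx => hV' x hx.1)
  rw [← ofReal_integral_eq_lintegral_ofReal hi]
  · rw [← intervalIntegral.integral_of_le hy.le,
      intervalIntegral.integral_eq_sub_of_hasDerivAt_of_le hy.le hc (fun x hx => hV x hx.1)
        ((intervalIntegrable_iff_integrableOn_Ioc_of_le hy.le).2 hi), h0, sub_zero]
  · rw [Filter.EventuallyLE, ae_restrict_iff' measurableSet_Ioc]
    filter_upwards with t ht
    exact hV' t ht.1

/-- The Gaussian weight. -/
noncomputable def gw (y : ℝ) : ℝ := Real.exp (-y ^ 2 / 4)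

lemma gw_pos (y : ℝ) : 0 < gw y := Real.exp_pos _

lemma gw_le_one (y : ℝ) : gw y ≤ 1 := by
  unfold gw
  rw [Real.exp_le_one_iff]
  nlinarith [sq_nonneg y]

lemma gw_hasDeriv (y : ℝ) : HasDerivAt gw (-y / 2 * gw y) y := by
  have h1 : HasDerivAt (fun y : ℝ => -y ^ 2 / 4) (-y / 2) y := by
    have := ((hasDerivAt_pow 2 y).neg).div_const 4
    refine this.congr_deriv ?_
    norm_num; ring
  exact h1.exp.congr_deriv (by unfold gw; ring)

lemma gw_mul_le (y : ℝ) : gw y * (1 + y ^ 2 / 4) ≤ 1 := by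
  have h1 := Real.add_one_le_exp (y ^ 2 / 4)
  have h2 : gw y * Real.exp (y ^ 2 / 4) = 1 := by
    unfold gw; rw [← Real.exp_add]; simp; ring
  have h3 := gw_pos y
  nlinarith

lemma gw_cont : Continuous gw := continuous_iff_continuousAt.2 fun y => (gw_hasDeriv y).continuousAt

lemma gw_tendsto : Filter.Tendsto gw Filter.atTop (nhds 0) := by
  have h : Filter.Tendsto (fun y : ℝ => y⁻¹ * 4) Filter.atTop (nhds (0 * 4)) :=
    tendsto_inv_atTop_zero.mul_const 4
  rw [zero_mul] at h
  refine squeeze_zero' (Filter.Eventually.of_forall fun y => (gw_pos y).le) ?_ h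
  filter_upwards [Filter.eventually_ge_atTop 1] with y hy
  have := gw_mul_le y
  have hg := gw_pos y
  have hy0 : 0 < y := by linarith
  rw [inv_mul_eq_div, le_div_iff₀ hy0]
  nlinarith

lemma rpow_hasDeriv (p : ℝ) {y : ℝ} (hy : 0 < y) :
    HasDerivAt (fun y : ℝ => y ^ p) (p * y ^ p / y) y := by
  refine (Real.hasDerivAt_rpow_const (p := p) (Or.inl hy.ne')).congr_deriv ?_
  rw [Real.rpow_sub_one hy.ne']; ring

lemma lam_pow {n : ℕ} (hn : 4 ≤ n) :
    (2 * kap) ^ n * lam n ^ n = del n * (del n + 1) * lam n := by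
  have h4 : (4:ℝ) ≤ n := by exact_mod_cast hn
  have hk := kap_pos
  have hd : 0 < del n := by rw [del_eq hn]; have := eps_pos hn; linarith
  have h0 : 0 < del n * (del n + 1) / (2 * kap) ^ n := by positivity
  have h1 : lam n ^ (n - 1) = del n * (del n + 1) / (2 * kap) ^ n := by
    rw [← Real.rpow_natCast]
    unfold lam
    rw [← Real.rpow_mul h0.le, Nat.cast_sub (by omega)]
    have : 1 / ((n:ℝ) - 1) * ((n:ℝ) - (1:ℕ)) = 1 := by
      have : (n:ℝ) - 1 ≠ 0 := by linarith
      push_cast; field_simp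
    rw [this, Real.rpow_one]
  have h2 : lam n ^ n = lam n ^ (n - 1) * lam n := by
    rw [← pow_succ]; congr 1; omega
  rw [h2, h1]
  field_simp

lemma key_pow {n : ℕ} (hn : 4 ≤ n) {y : ℝ} (hy : 0 < y) :
    (2 * kap * y) ^ n * (lam n * y ^ (-del n)) ^ n =
      del n * (del n + 1) / y ^ 2 * (lam n * y ^ (-del n)) := by
  have h4 : (4:ℝ) ≤ n := by exact_mod_cast hn
  have h1 : y ^ n * (y ^ (-del n)) ^ n = y ^ (-del n) / y ^ 2 := by
    rw [← Real.rpow_natCast (y ^ (-del n)) n, ← Real.rpow_mul hy.le, ← Real.rpow_natCast y n,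
      ← Real.rpow_natCast y 2, ← Real.rpow_add hy, ← Real.rpow_sub hy]
    congr 1
    unfold del
    have : (n:ℝ) - 1 ≠ 0 := by linarith
    field_simp
    push_cast
    ring
  have h2 := lam_pow hn
  calc _ = ((2 * kap) ^ n * lam n ^ n) * (y ^ n * (y ^ (-del n)) ^ n) := by
        rw [mul_pow, mul_pow (lam n)]; ring
    _ = _ := by rw [h1, h2]; ring

lemma sub_ineq {n : ℕ} (hn : 4 ≤ n) {y : ℝ} (hy : 0 < y) :
    (2 * mu1 y * (gw y * (lam n * y ^ (-del n)))) ^ n ≤ gw y * (lam n * y ^ (-del n)) *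
      (del n * (del n + 1) / y ^ 2 + (del n - 1) / 2 + eps n) := by
  have hk := kap_pos
  have he := eps_pos hn
  have hd := del_eq hn
  have hl := lam_pos hn
  have hP : 0 < y ^ (-del n) := Real.rpow_pos_of_pos hy _
  have hg := gw_pos y
  have hg1 := gw_le_one y
  have hQ := mu1_pos hy
  have hQ1 := mu1_upper hy.le
  have hd0 : 0 < del n := by linarith
  have a1 : (2 * mu1 y * (gw y * (lam n * y ^ (-del n)))) ^ n ≤
      (2 * kap * y * (gw y * (lam n * y ^ (-del n)))) ^ n := by
    gcongr ?_ ^ n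
    have : 2 * mu1 y ≤ 2 * kap * y := by linarith
    gcongr
  have a2 : (2 * kap * y * (gw y * (lam n * y ^ (-del n)))) ^ n =
      gw y ^ n * (del n * (del n + 1) / y ^ 2 * (lam n * y ^ (-del n))) := by
    rw [← key_pow hn hy, mul_pow, mul_pow (gw y)]; ring
  have a3 : gw y ^ n ≤ gw y := pow_le_of_le_one hg.le hg1 (by omega)
  have a4 : gw y ^ n * (del n * (del n + 1) / y ^ 2 * (lam n * y ^ (-del n))) ≤
      gw y * (del n * (del n + 1) / y ^ 2 * (lam n * y ^ (-del n))) := by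
    gcongr
  have a5 : 0 ≤ gw y * (lam n * y ^ (-del n)) * ((del n - 1) / 2 + eps n) := by
    have : 0 ≤ (del n - 1) / 2 + eps n := by linarith
    positivity
  nlinarith

set_option maxHeartbeats 2000000 in
lemma super_ineq {n : ℕ} (hn : 4 ≤ n) : ∃ N : ℝ, 0 < N ∧ ∀ y : ℝ, 0 < y →
    gw y * (lam n * y ^ (-del n)) *
      (del n * (del n + 1) / y ^ 2 + (del n - 1) / 2 + eps n) - (1 / 2 - eps n) * gw y * N ≤
    (2 * mu1 y * (gw y * (lam n * y ^ (-del n) + N))) ^ n := by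
  have hk := kap_pos
  have he := eps_pos hn
  have he3 := eps_le hn
  have hd := del_eq hn
  have hl := lam_pos hn
  have hd0 : 0 < del n := by linarith
  have h4 : (4:ℝ) ≤ n := by exact_mod_cast hn
  set D := del n * (del n + 1) with hD
  have hDp : 0 < D := by positivity
  set c1 := (del n - 1) / 2 + eps n with hc1
  have hc1p : 0 < c1 := by rw [hc1]; linarith
  set ρ := Real.exp (-((2 * n - 1) / 4 : ℝ)) with hρ
  have hρp : 0 < ρ := Real.exp_pos _
  set j : ℝ := (2 * n - 1) / 4 with hj
  have hjp : 0 < j := by rw [hj]; linarith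
  refine ⟨6 * lam n * (D + c1) + lam n * (D * j + c1) / (ρ * n * D), by positivity, ?_⟩
  set N := 6 * lam n * (D + c1) + lam n * (D * j + c1) / (ρ * n * D) with hN
  have hN1 : 6 * lam n * (D + c1) ≤ N := by
    have : 0 < lam n * (D * j + c1) / (ρ * n * D) := by positivity
    linarith
  have hN2 : lam n * (D * j + c1) ≤ ρ * n * D * N := by
    have h1 : lam n * (D * j + c1) / (ρ * n * D) ≤ N := by
      have : 0 < 6 * lam n * (D + c1) := by positivity
      linarith
    rw [div_le_iff₀ (by positivity)] at h1
    linarith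
  have hNp : 0 < N := by positivity
  intro y hy
  have hP : 0 < y ^ (-del n) := Real.rpow_pos_of_pos hy _
  have hkey := key_pow hn hy
  set P := y ^ (-del n) with hPd
  have hg := gw_pos y
  have hg1 := gw_le_one y
  have hQ := mu1_pos hy
  have hQ1 := mu1_lower hy.le
  change kap * y * gw y ≤ mu1 y at hQ1
  by_cases hy1 : 1 ≤ y
  · have hP1 : P ≤ 1 := Real.rpow_le_one_of_one_le_of_nonpos hy1 (by linarith)
    have b1 : D / y ^ 2 ≤ D := div_le_self hDp.le (by nlinarith)
    have b2 : lam n * P * (D / y ^ 2 + c1) ≤ lam n * 1 * (D + c1) := by gcongr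
    have b3 : lam n * P * (D / y ^ 2 + c1) ≤ (1 / 2 - eps n) * N := by nlinarith
    have b4 : 0 ≤ (2 * mu1 y * (gw y * (lam n * P + N))) ^ n := by positivity
    have b5 := mul_le_mul_of_nonneg_left b3 hg.le
    have b6 : gw y * (lam n * P) * (D / y ^ 2 + (del n - 1) / 2 + eps n) =
      gw y * (lam n * P * (D / y ^ 2 + c1)) := by rw [hc1]; ring
    rw [b6]; linarith
  · push Not at hy1
    have hP2 : P ≤ 1 / y ^ 2 := by
      have : P ≤ y ^ (-2:ℝ) :=
        Real.rpow_le_rpow_of_exponent_ge hy hy1.le (by linarith)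
      refine this.trans (le_of_eq ?_)
      rw [Real.rpow_neg hy.le]; norm_num
    set E := gw y ^ (2 * n - 1) with hE
    have hEe : E = Real.exp (-(j * y ^ 2)) := by
      rw [hE, gw, ← Real.exp_nat_mul, Nat.cast_sub (by omega)]
      congr 1; push_cast; rw [hj]; ring
    have hE1 : 1 - j * y ^ 2 ≤ E := by
      rw [hEe]; have := Real.add_one_le_exp (-(j * y ^ 2)); linarith
    have hE2 : ρ ≤ E := by
      rw [hEe, hρ, Real.exp_le_exp]
      have h1 : y ^ 2 ≤ 1 := by nlinarith
      have h2 := mul_le_mul_of_nonneg_left h1 hjp.le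
      linarith
    have d1 : (2 * kap * y * gw y * (gw y * (lam n * P + N))) ^ n ≤
        (2 * mu1 y * (gw y * (lam n * P + N))) ^ n := by
      gcongr ?_ ^ n
      have : 2 * kap * y * gw y ≤ 2 * mu1 y := by linarith
      gcongr
    have d2 : (2 * kap * y * gw y * (gw y * (lam n * P + N))) ^ n =
        gw y * E * ((2 * kap * y) ^ n * (lam n * P + N) ^ n) := by
      have : gw y * E = gw y ^ n * gw y ^ n := by
        rw [hE, ← pow_succ', ← pow_add]; congr 1; omega
      rw [this, mul_pow, mul_pow, mul_pow (gw y)]; ring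
    have hlP : 0 < lam n * P := by positivity
    have d3 : (lam n * P) ^ n * (1 + n * (N / (lam n * P))) ≤ (lam n * P + N) ^ n := by
      have : lam n * P + N = (lam n * P) * (1 + N / (lam n * P)) := by field_simp
      rw [this, mul_pow (lam n * P) (1 + N / (lam n * P))]
      apply mul_le_mul_of_nonneg_left _ (by positivity)
      have h0 : 0 < N / (lam n * P) := by positivity
      exact one_add_mul_le_pow (by linarith) n
    have d4 : (2 * kap * y) ^ n * ((lam n * P) ^ n * (1 + n * (N / (lam n * P)))) =
        D / y ^ 2 * (lam n * P + n * N) := by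
      rw [← mul_assoc, hkey]; field_simp; exact hD.symm
    have d5 : D / y ^ 2 * (lam n * P + n * N) ≤ (2 * kap * y) ^ n * (lam n * P + N) ^ n := by
      rw [← d4]; gcongr
    have d6 : gw y * E * (D / y ^ 2 * (lam n * P + n * N)) ≤
        (2 * mu1 y * (gw y * (lam n * P + N))) ^ n := by
      refine le_trans ?_ d1
      rw [d2]
      have : 0 < E := hρp.trans_le hE2
      gcongr
    have d7 : lam n * P * (D / y ^ 2 + c1) ≤ E * (D / y ^ 2 * (lam n * P + n * N)) := by
      have e1 : D / y ^ 2 * (lam n * P) * (1 - j * y ^ 2) ≤ D / y ^ 2 * (lam n * P) * E := by gcongr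
      have e2 : D / y ^ 2 * (lam n * P) * (1 - j * y ^ 2) =
        lam n * P * (D / y ^ 2) - lam n * P * (D * j) := by field_simp
      have e3 : D / y ^ 2 * (n * N) * ρ ≤ D / y ^ 2 * (n * N) * E := by gcongr
      have e4 : P * (lam n * (D * j + c1)) ≤ 1 / y ^ 2 * (ρ * n * D * N) := by gcongr
      have e5 : 1 / y ^ 2 * (ρ * n * D * N) = D / y ^ 2 * (n * N) * ρ := by ring
      linarith
    have d8 := mul_le_mul_of_nonneg_left d7 hg.le
    have d9 : gw y * (lam n * P) * (D / y ^ 2 + (del n - 1) / 2 + eps n) =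
      gw y * (lam n * P * (D / y ^ 2 + c1)) := by rw [hc1]; ring
    have d10 : 0 ≤ (1 / 2 - eps n) * gw y * N := by
      have : 0 ≤ 1 / 2 - eps n := by linarith
      positivity
    rw [d9]
    have d11 : gw y * E * (D / y ^ 2 * (lam n * P + n * N)) =
      gw y * (E * (D / y ^ 2 * (lam n * P + n * N))) := by ring
    linarith

lemma slope_bound {n : ℕ} (hn : 4 ≤ n) {N : ℝ} (hN : 0 < N) : ∃ B : ℝ, 0 < B ∧ ∀ y : ℝ, 0 < y →
    n * (2 * mu1 y) ^ n * (gw y * (lam n * y ^ (-del n) + N)) ^ (n - 1) ≤ B / y ^ 2 := by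
  have hk := kap_pos
  have he := eps_pos hn
  have he3 := eps_le hn
  have hd := del_eq hn
  have hl := lam_pos hn
  have hd0 : 0 < del n := by linarith
  have h4 : (4:ℝ) ≤ n := by exact_mod_cast hn
  refine ⟨n * (del n * (del n + 1)) * (1 + 4 * N / lam n) ^ (n - 1), by positivity, ?_⟩
  intro y hy
  have hP : 0 < y ^ (-del n) := Real.rpow_pos_of_pos hy _
  have hkey := key_pow hn hy
  have hPi : y ^ (-del n) * y ^ del n = 1 := by
    rw [← Real.rpow_add hy]; simp
  have hyd : y ^ del n ≤ 1 + y ^ 2 := by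
    by_cases h : y ≤ 1
    · have := Real.rpow_le_one hy.le h hd0.le
      nlinarith
    · push Not at h
      have : y ^ del n ≤ y ^ (2:ℝ) := Real.rpow_le_rpow_of_exponent_le h.le (by linarith)
      rw [Real.rpow_two] at this; linarith
  set P := y ^ (-del n) with hPd
  set Pi := y ^ del n with hPid
  have hPip : 0 < Pi := Real.rpow_pos_of_pos hy _
  have hg := gw_pos y
  have hg1 := gw_le_one y
  have hQ := mu1_pos hy
  have hQ1 := mu1_upper hy.le
  have a1 : gw y * (lam n * P + N) ≤ lam n * P * (1 + 4 * N / lam n) := by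
    have b1 : lam n * P + N = lam n * P * (1 + N / lam n * Pi) := by
      have : lam n * P * (1 + N / lam n * Pi) = lam n * P + N * (P * Pi) := by field_simp
      rw [this, hPi, mul_one]
    have b2 : gw y * Pi ≤ 4 := by
      have := gw_mul_le y
      nlinarith
    have b3 : gw y * (1 + N / lam n * Pi) ≤ 1 + 4 * N / lam n := by
      have : N / lam n * (gw y * Pi) ≤ N / lam n * 4 := by gcongr
      have e : 4 * N / lam n = N / lam n * 4 := by ring
      rw [e]; nlinarith
    rw [b1]
    calc _ = lam n * P * (gw y * (1 + N / lam n * Pi)) := by ring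
      _ ≤ _ := by gcongr
  have a2 : (2 * mu1 y) ^ n ≤ (2 * kap * y) ^ n := by
    gcongr ?_ ^ n
    linarith
  have hlP : 0 < lam n * P := by positivity
  have a3 : (2 * kap * y) ^ n * (lam n * P) ^ (n - 1) = del n * (del n + 1) / y ^ 2 := by
    have : (lam n * P) ^ n = (lam n * P) ^ (n - 1) * (lam n * P) := by
      rw [← pow_succ]; congr 1; omega
    rw [this, ← mul_assoc] at hkey
    exact mul_right_cancel₀ hlP.ne' hkey
  calc _ ≤ n * (2 * kap * y) ^ n * (lam n * P * (1 + 4 * N / lam n)) ^ (n - 1) := by gcongr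
    _ = n * ((2 * kap * y) ^ n * (lam n * P) ^ (n - 1)) * (1 + 4 * N / lam n) ^ (n - 1) := by
      rw [mul_pow (lam n * P)]; ring
    _ = _ := by rw [a3]; ring

lemma pow_sub_le {a b : ℝ} (ha : 0 ≤ a) (hab : a ≤ b) (k : ℕ) :
    b ^ (k + 1) - a ^ (k + 1) ≤ (k + 1) * b ^ k * (b - a) := by
  induction k with
  | zero => simp
  | succ k ih =>
    have hb : 0 ≤ b := ha.trans hab
    have h1 : a ^ (k + 1) ≤ b ^ (k + 1) := by gcongr
    have h2 := mul_le_mul_of_nonneg_left ih hb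
    have h3 := mul_le_mul_of_nonneg_right h1 (sub_nonneg.2 hab)
    push_cast
    have e1 : b ^ (k + 1 + 1) = b * b ^ (k + 1) := by ring
    have e2 : a ^ (k + 1 + 1) = a * a ^ (k + 1) := by ring
    have e3 : b ^ (k + 1) = b * b ^ k := by ring
    rw [e1, e2]
    have e4 : b * ((k + 1) * b ^ k * (b - a)) = (k + 1) * b ^ (k + 1) * (b - a) := by rw [e3]; ring
    rw [e4] at h2
    nlinarith

lemma comparison_integrals {m d l N : ℝ} (hd : 0 < d) (hm : d < m) (hl : 0 ≤ l) (hN : 0 ≤ N) :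
    (∀ s : ℝ, 0 < s → ∫⁻ t in Set.Ioi s, ENNReal.ofReal (gw t / t ^ m *
      (l * t ^ (-d) * ((m * (m + 1) - d * (d + 1)) / t ^ 2 + (m - d) / 2) +
        N * (m * (m + 1) / t ^ 2 + m / 2))) =
      ENNReal.ofReal (gw s / s ^ m * (l * (m - d) * s ^ (-d) + N * m) / s)) ∧
    (∀ y : ℝ, 0 < y → ∫⁻ s in Set.Ioc 0 y, ENNReal.ofReal ((s ^ m) ^ 2 / gw s) *
      ENNReal.ofReal (gw s / s ^ m * (l * (m - d) * s ^ (-d) + N * m) / s) =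
      ENNReal.ofReal (y ^ m * (l * y ^ (-d) + N))) := by
  have hm0 : 0 < m := hd.trans hm
  have hmd : 0 < m - d := by linarith
  constructor
  · intro s hs
    apply lintegral_tail (q := fun s => gw s / s ^ m * (l * (m - d) * s ^ (-d) + N * m) / s)
    · intro x hx
      have hx0 : 0 < x := hs.trans_le hx
      have hM : 0 < x ^ m := Real.rpow_pos_of_pos hx0 _
      have := (((gw_hasDeriv x).div (rpow_hasDeriv m hx0) hM.ne').mul
        (((rpow_hasDeriv (-d) hx0).const_mul (l * (m - d))).add_const (N * m))).div
        (hasDerivAt_id x) hx0.ne'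
      refine this.congr_deriv ?_
      simp only [id, Pi.mul_apply, Pi.div_apply]
      field_simp
      ring
    · intro x hx
      have hx0 : 0 < x := hs.trans_le hx
      have hg := gw_pos x
      have h1 : 0 ≤ m * (m + 1) - d * (d + 1) := by nlinarith
      have h2 : 0 ≤ (m - d) / 2 := by linarith
      positivity
    · have t1 : Filter.Tendsto (fun x : ℝ => x ^ (-m)) Filter.atTop (nhds 0) :=
        tendsto_rpow_neg_atTop hm0
      have t2 : Filter.Tendsto (fun x : ℝ => x ^ (-d)) Filter.atTop (nhds 0) :=
        tendsto_rpow_neg_atTop hd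
      have t3 := ((gw_tendsto.mul t1).mul ((t2.const_mul (l * (m - d))).add_const (N * m))).mul
        tendsto_inv_atTop_zero
      simp only [mul_zero, zero_mul] at t3
      refine t3.congr' ?_
      filter_upwards [Filter.eventually_gt_atTop 0] with x hx
      rw [Real.rpow_neg hx.le m]; simp only [div_eq_mul_inv]
  · intro y hy
    have e : ∀ x : ℝ, 0 ≤ x → x ^ m * (l * x ^ (-d) + N) = l * x ^ (m - d) + N * x ^ m := by
      intro x hx
      rcases hx.eq_or_lt with rfl | hx
      · rw [Real.zero_rpow hm0.ne', Real.zero_rpow hmd.ne']; simp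
      · rw [sub_eq_add_neg, Real.rpow_add hx]; ring
    rw [← lintegral_head (V := fun y => y ^ m * (l * y ^ (-d) + N))
      (V' := fun s => s ^ m * (l * (m - d) * s ^ (-d) + N * m) / s) hy]
    · apply MeasureTheory.setLIntegral_congr_fun measurableSet_Ioc
      intro s hs
      have hs0 : 0 < s := hs.1
      have hM : 0 < s ^ m := Real.rpow_pos_of_pos hs0 _
      have hg := gw_pos s
      simp only
      rw [← ENNReal.ofReal_mul (by positivity)]
      congr 1
      field_simp
    · have : ContinuousOn (fun x : ℝ => l * x ^ (m - d) + N * x ^ m) (Set.Icc 0 y) := by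
        apply ContinuousOn.add
        · exact continuousOn_const.mul (Real.continuous_rpow_const hmd.le).continuousOn
        · exact continuousOn_const.mul (Real.continuous_rpow_const hm0.le).continuousOn
      exact this.congr fun x hx => e x hx.1
    · intro x hx
      refine ((rpow_hasDeriv m hx).mul
        (((rpow_hasDeriv (-d) hx).const_mul l).add_const N)).congr_deriv ?_
      field_simp
      ring
    · intro x hx
      have h2 : 0 ≤ m - d := by linarith
      positivity
    · simp [Real.zero_rpow hm0.ne']


lemma profile_exists {n : ℕ} (hn : 4 ≤ n) : ∃ u : ℝ → ℝ, IsDiffusiveProfile n u := by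
  have he := eps_pos hn
  have he3 := eps_le hn
  have hd := del_eq hn
  have hl := lam_pos hn
  have hd0 : 0 < del n := by linarith
  obtain ⟨N, hN, hsuper⟩ := super_ineq hn
  obtain ⟨B, hB, hslope⟩ := slope_bound hn hN
  set d := del n with hdd
  set l := lam n with hll
  set e := eps n with hee
  set m := B + 3 with hm
  have hdm : d < m := by linarith
  have hm0 : 0 < m := by linarith
  set K : ℝ → ℝ := fun y => m * (m + 1) / y ^ 2 + (m - 1) / 2 + e with hK
  set g : ℝ → ℝ → ℝ := fun t x =>
    (K t * (gw t / t ^ m * x) - (2 * mu1 t * (gw t / t ^ m * x)) ^ n) / t ^ m with hg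
  have hMpos : ∀ t : ℝ, 0 < t → 0 < t ^ m := fun t ht => Real.rpow_pos_of_pos ht _
  have hPpos : ∀ t : ℝ, 0 < t → 0 < t ^ (-d) := fun t ht => Real.rpow_pos_of_pos ht _
  have hMc : ContinuousOn (fun t : ℝ => t ^ m) (Set.Ioi 0) :=
    (Real.continuous_rpow_const hm0.le).continuousOn
  have hMne : ∀ t ∈ Set.Ioi (0:ℝ), t ^ m ≠ 0 := fun t ht => (hMpos t ht).ne'
  have hKc : ContinuousOn K (Set.Ioi 0) := by
    apply ContinuousOn.add _ continuousOn_const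
    apply ContinuousOn.add _ continuousOn_const
    apply ContinuousOn.div continuousOn_const (by fun_prop)
    intro t ht
    exact pow_ne_zero 2 (ne_of_gt ht)
  have hgcont : ∀ v : ℝ → ℝ, ContinuousOn v (Set.Ioi 0) →
      ContinuousOn (fun t => g t (v t)) (Set.Ioi 0) := by
    intro v hv
    have c1 : ContinuousOn (fun t => gw t / t ^ m * v t) (Set.Ioi 0) :=
      (gw_cont.continuousOn.div hMc hMne).mul hv
    exact ((hKc.mul c1).sub (((continuous_const.mul mu1_cont).continuousOn.mul c1).pow n)).div
      hMc hMne
  have hgm : ∀ t, 0 < t → MonotoneOn (g t) (Set.Icc 0 (t ^ m * (l * t ^ (-d) + N))) := by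
    intro t ht a ha b hb hab
    have hMp := hMpos t ht
    have hgp := gw_pos t
    have hQ := mu1_pos ht
    have hs := hslope t ht
    have hr : 0 < gw t / t ^ m := by positivity
    have hsl : n * (2 * mu1 t) ^ n * (gw t * (l * t ^ (-d) + N)) ^ (n - 1) ≤ K t := by
      refine hs.trans ?_
      have h1 : B / t ^ 2 ≤ m * (m + 1) / t ^ 2 := by
        gcongr; nlinarith
      simp only [hK]; linarith
    set a' := gw t / t ^ m * a with ha'
    set b' := gw t / t ^ m * b with hb'
    have ha0 : 0 ≤ a' := mul_nonneg hr.le ha.1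
    have hab' : a' ≤ b' := by rw [ha', hb']; gcongr
    have hb0 : 0 ≤ b' := ha0.trans hab'
    have hbu : b' ≤ gw t * (l * t ^ (-d) + N) := by
      have h1 : b' ≤ gw t / t ^ m * (t ^ m * (l * t ^ (-d) + N)) := by
        rw [hb']; exact mul_le_mul_of_nonneg_left hb.2 hr.le
      refine h1.trans (le_of_eq ?_)
      field_simp
    have hpow := pow_sub_le ha0 hab' (n - 1)
    have hn1 : n - 1 + 1 = n := by omega
    rw [hn1] at hpow
    have hcast : ((n - 1 : ℕ) : ℝ) + 1 = n := by exact_mod_cast hn1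
    rw [hcast] at hpow
    have h3 : (2 * mu1 t * b') ^ n - (2 * mu1 t * a') ^ n ≤ K t * (b' - a') := by
      calc _ = (2 * mu1 t) ^ n * (b' ^ n - a' ^ n) := by rw [mul_pow, mul_pow _ a']; ring
        _ ≤ (2 * mu1 t) ^ n * (n * b' ^ (n - 1) * (b' - a')) := by gcongr
        _ = n * (2 * mu1 t) ^ n * b' ^ (n - 1) * (b' - a') := by ring
        _ ≤ n * (2 * mu1 t) ^ n * (gw t * (l * t ^ (-d) + N)) ^ (n - 1) * (b' - a') := by
          have : 0 ≤ b' - a' := by linarith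
          gcongr
        _ ≤ K t * (b' - a') := by
          have : 0 ≤ b' - a' := by linarith
          gcongr
    simp only [hg]
    change (K t * a' - (2 * mu1 t * a') ^ n) / t ^ m ≤ (K t * b' - (2 * mu1 t * b') ^ n) / t ^ m
    gcongr ?_ / t ^ m
    linarith
  have hg0 : ∀ t, 0 < t → 0 ≤ g t 0 := by
    intro t ht
    have : n ≠ 0 := by omega
    simp [hg, this]
  obtain ⟨tail0, head0⟩ := comparison_integrals hd0 hdm hl.le le_rfl (N := 0)
  obtain ⟨tail1, head1⟩ := comparison_integrals hd0 hdm hl.le hN.le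
  have hgval : ∀ t, 0 < t → ∀ x, g t (t ^ m * x) =
      (K t * (gw t * x) - (2 * mu1 t * (gw t * x)) ^ n) / t ^ m := by
    intro t ht x
    have hMp := hMpos t ht
    have : gw t / t ^ m * (t ^ m * x) = gw t * x := by field_simp
    simp only [hg, this]
  have sub1 : ∀ t, 0 < t → gw t / t ^ m *
      (l * t ^ (-d) * ((m * (m + 1) - d * (d + 1)) / t ^ 2 + (m - d) / 2) +
        0 * (m * (m + 1) / t ^ 2 + m / 2)) ≤ g t (t ^ m * (l * t ^ (-d) + 0)) := by
    intro t ht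
    have hMp := hMpos t ht
    have h1 := sub_ineq hn ht
    rw [hgval t ht, add_zero, div_mul_eq_mul_div]
    gcongr ?_ / t ^ m
    rw [← sub_nonneg] at h1 ⊢
    refine h1.trans (le_of_eq ?_)
    simp only [hK]
    ring
  have super1 : ∀ t, 0 < t → g t (t ^ m * (l * t ^ (-d) + N)) ≤ gw t / t ^ m *
      (l * t ^ (-d) * ((m * (m + 1) - d * (d + 1)) / t ^ 2 + (m - d) / 2) +
        N * (m * (m + 1) / t ^ 2 + m / 2)) := by
    intro t ht
    have hMp := hMpos t ht
    have h1 := hsuper t ht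
    rw [hgval t ht, div_mul_eq_mul_div]
    gcongr ?_ / t ^ m
    rw [← sub_nonneg] at h1 ⊢
    refine h1.trans (le_of_eq ?_)
    simp only [hK]
    ring
  have tl0 : ∀ s, 0 < s → ENNReal.ofReal (gw s / s ^ m * (l * (m - d) * s ^ (-d) + 0 * m) / s) ≤
      ∫⁻ t in Set.Ioi s, ENNReal.ofReal (g t (t ^ m * (l * t ^ (-d) + 0))) := by
    intro s hs
    rw [← tail0 s hs]
    apply MeasureTheory.setLIntegral_mono' measurableSet_Ioi
    intro t ht
    exact ENNReal.ofReal_le_ofReal (sub1 t (hs.trans ht))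
  have tl1 : ∀ s, 0 < s →
      ∫⁻ t in Set.Ioi s, ENNReal.ofReal (g t (t ^ m * (l * t ^ (-d) + N))) ≤
      ENNReal.ofReal (gw s / s ^ m * (l * (m - d) * s ^ (-d) + N * m) / s) := by
    intro s hs
    rw [← tail1 s hs]
    apply MeasureTheory.setLIntegral_mono' measurableSet_Ioi
    intro t ht
    exact ENNReal.ofReal_le_ofReal (super1 t (hs.trans ht))
  obtain ⟨v, h, hvh⟩ := fixpoint_exists (fun y => (y ^ m) ^ 2 / gw y) g
    (fun y => y ^ m * (l * y ^ (-d) + 0)) (fun y => y ^ m * (l * y ^ (-d) + N))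
    ((hMc.pow 2).div gw_cont.continuousOn fun t _ => (gw_pos t).ne')
    (fun t ht => by have := hMpos t ht; have := gw_pos t; positivity)
    hgcont hgm hg0
    (fun t ht => by have := hMpos t ht; have := hPpos t ht; positivity)
    (fun t ht => by have := hMpos t ht; have := hPpos t ht; gcongr)
    (fun s hs => ne_top_of_le_ne_top ENNReal.ofReal_ne_top (tl1 s hs))
    (fun y hy => by
      rw [← head0 y hy]
      apply MeasureTheory.setLIntegral_mono' measurableSet_Ioc
      intro s hs
      gcongr
      exact tl0 s hs.1)
    (fun y hy => by
      rw [← head1 y hy]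
      apply MeasureTheory.setLIntegral_mono' measurableSet_Ioc
      intro s hs
      gcongr
      exact tl1 s hs.1)
  simp only [add_zero] at hvh
  set u : ℝ → ℝ := fun y => gw y / y ^ m * v y with hu
  set u1 : ℝ → ℝ := fun y => -(m / y + y / 2) * u y + y ^ m * h y with hu1
  set u2 : ℝ → ℝ := fun y => (2 * mu1 y * u y) ^ n - y / 2 * u1 y - e * u y with hu2
  have hulow : ∀ y, 0 < y → gw y * (l * y ^ (-d)) ≤ u y := by
    intro y hy
    have hMp := hMpos y hy
    have hgp := gw_pos y
    have h1 := (hvh y hy).2.2.1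
    calc _ = gw y / y ^ m * (y ^ m * (l * y ^ (-d))) := by field_simp
      _ ≤ _ := by simp only [hu]; gcongr
  have huup : ∀ y, 0 < y → u y ≤ gw y * (l * y ^ (-d) + N) := by
    intro y hy
    have hMp := hMpos y hy
    have hgp := gw_pos y
    have h1 := (hvh y hy).2.2.2
    calc u y ≤ gw y / y ^ m * (y ^ m * (l * y ^ (-d) + N)) := by simp only [hu]; gcongr
      _ = _ := by field_simp
  have hupos : ∀ y, 0 < y → 0 < u y := by
    intro y hy
    have := hulow y hy
    have hP := hPpos y hy
    have hgp := gw_pos y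
    have : 0 < gw y * (l * y ^ (-d)) := by positivity
    linarith
  have hdu : ∀ y, 0 < y → HasDerivAt u (u1 y) y := by
    intro y hy
    have hMp := hMpos y hy
    have hgp := gw_pos y
    refine (((gw_hasDeriv y).div (rpow_hasDeriv m hy) hMp.ne').mul (hvh y hy).1).congr_deriv ?_
    simp only [hu1, hu, Pi.div_apply]
    field_simp
    ring
  have hdu1 : ∀ y, 0 < y → HasDerivAt u1 (u2 y) y := by
    intro y hy
    have hMp := hMpos y hy
    have hgp := gw_pos y
    have a1 : HasDerivAt (fun y : ℝ => -(m / y + y / 2)) (m / y ^ 2 - 1 / 2) y := by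
      have := (((hasDerivAt_inv hy.ne').const_mul m).add ((hasDerivAt_id y).div_const 2)).neg
      refine this.congr_deriv ?_
      field_simp
      ring
    refine ((a1.mul (hdu y hy)).add ((rpow_hasDeriv m hy).mul (hvh y hy).2.1)).congr_deriv ?_
    have hgu : g y (v y) = (K y * u y - (2 * mu1 y * u y) ^ n) / y ^ m := rfl
    have hM' : y ^ m * (-(g y (v y))) = (2 * mu1 y * u y) ^ n - K y * u y := by
      rw [hgu]; field_simp; ring
    rw [hM']
    simp only [hu2, hK]
    set X := (2 * mu1 y * u y) ^ n
    have hh : y ^ m * h y = u1 y + (m / y + y / 2) * u y := by simp only [hu1]; ring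
    have : m * y ^ m / y * h y = m / y * (y ^ m * h y) := by ring
    rw [this, hh]
    field_simp
    ring
  have hu1c : ContinuousOn u1 (Set.Ioi 0) := fun y hy => (hdu1 y hy).continuousAt.continuousWithinAt
  have huc : ContinuousOn u (Set.Ioi 0) := fun y hy => (hdu y hy).continuousAt.continuousWithinAt
  have hu2c : ContinuousOn u2 (Set.Ioi 0) := by
    have := mu1_cont
    apply ContinuousOn.sub
    · apply ContinuousOn.sub
      · exact ((continuous_const.mul mu1_cont).continuousOn.mul huc).pow n
      · exact (continuous_id.div_const 2).continuousOn.mul hu1c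
    · exact continuousOn_const.mul huc
  have ed1 : ∀ y, 0 < y → deriv u y = u1 y := fun y hy => (hdu y hy).deriv
  have ed2 : ∀ y, 0 < y → deriv (deriv u) y = u2 y := by
    intro y hy
    have : deriv u =ᶠ[nhds y] u1 := by
      filter_upwards [Ioi_mem_nhds hy] with x hx using ed1 x hx
    rw [this.deriv_eq]; exact (hdu1 y hy).deriv
  refine ⟨u, ?_, hupos, ?_, ?_, ?_⟩
  · have h2 : ContDiffOn ℝ (1 + 1) u (Set.Ioi 0) := by
      rw [contDiffOn_succ_iff_deriv_of_isOpen isOpen_Ioi]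
      refine ⟨fun y hy => (hdu y hy).differentiableAt.differentiableWithinAt, by simp, ?_⟩
      have h1 : ContDiffOn ℝ (0 + 1) u1 (Set.Ioi 0) := by
        rw [contDiffOn_succ_iff_deriv_of_isOpen isOpen_Ioi]
        refine ⟨fun y hy => (hdu1 y hy).differentiableAt.differentiableWithinAt, by simp, ?_⟩
        rw [contDiffOn_zero]
        exact hu2c.congr fun y hy => (hdu1 y hy).deriv
      rw [zero_add] at h1
      exact h1.congr fun y hy => ed1 y hy
    exact h2
  · intro y hy
    rw [ed2 y hy, ed1 y hy]
    simp only [hu2]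
    ring
  · have hinv : ∀ y : ℝ, 0 < y → y ^ d * y ^ (-d) = 1 := fun y hy => by
      rw [← Real.rpow_add hy]; simp
    have g0 : Filter.Tendsto gw (nhdsWithin 0 (Set.Ioi 0)) (nhds 1) := by
      have := gw_cont.tendsto 0
      rw [show gw 0 = 1 by simp [gw]] at this
      exact this.mono_left nhdsWithin_le_nhds
    have y0 : Filter.Tendsto (fun y : ℝ => y ^ d) (nhdsWithin 0 (Set.Ioi 0)) (nhds 0) := by
      have := (Real.continuous_rpow_const hd0.le).tendsto 0
      rw [Real.zero_rpow hd0.ne'] at this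
      exact this.mono_left nhdsWithin_le_nhds
    have lo := g0.mul_const l
    have hi := g0.mul ((y0.mul_const N).const_add l)
    simp only [one_mul, zero_mul, add_zero] at lo hi
    refine tendsto_of_tendsto_of_tendsto_of_le_of_le' lo hi ?_ ?_
    · filter_upwards [self_mem_nhdsWithin] with y hy
      have hy0 : 0 < y := hy
      have hp : 0 < y ^ d := Real.rpow_pos_of_pos hy0 _
      calc gw y * l = y ^ d * y ^ (-d) * (gw y * l) := by rw [hinv y hy0]; ring
        _ = y ^ d * (gw y * (l * y ^ (-d))) := by ring
        _ ≤ _ := by gcongr; exact hulow y hy0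
    · filter_upwards [self_mem_nhdsWithin] with y hy
      have hy0 : 0 < y := hy
      have hp : 0 < y ^ d := Real.rpow_pos_of_pos hy0 _
      calc y ^ d * u y ≤ y ^ d * (gw y * (l * y ^ (-d) + N)) := by gcongr; exact huup y hy0
        _ = gw y * (l * (y ^ d * y ^ (-d)) + y ^ d * N) := by ring
        _ = _ := by rw [hinv y hy0]; ring
  · have t0 : Filter.Tendsto (fun y : ℝ => (l + N) * 4 * y⁻¹) Filter.atTop (nhds 0) := by
      simpa using tendsto_inv_atTop_zero.const_mul ((l + N) * 4)
    refine squeeze_zero' ?_ ?_ t0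
    · filter_upwards [Filter.eventually_gt_atTop 0] with y hy
      have := hupos y hy
      positivity
    · filter_upwards [Filter.eventually_ge_atTop 1] with y hy
      have hy0 : 0 < y := by linarith
      have hgp := gw_pos y
      have hP1 : y ^ (-d) ≤ 1 := Real.rpow_le_one_of_one_le_of_nonpos hy (by linarith)
      have hy2 : y ^ (2 * e) ≤ y := by
        conv_rhs => rw [← Real.rpow_one y]
        exact Real.rpow_le_rpow_of_exponent_le hy (by linarith)
      have hgy : y * gw y ≤ 4 * y⁻¹ := by
        rw [← div_eq_mul_inv, le_div_iff₀ hy0]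
        have := gw_mul_le y
        nlinarith
      have hup := hupos y hy0
      calc y ^ (2 * e) * u y ≤ y * (gw y * (l * 1 + N)) := by
            gcongr
            exact (huup y hy0).trans (by gcongr)
        _ = (l + N) * (y * gw y) := by ring
        _ ≤ (l + N) * (4 * y⁻¹) := by gcongr
        _ = _ := by ring

/-- For every integer n ≥ 4 there exists a unique diffusive profile μ₂. -/
theorem diffusive_profile_exists_unique (n : ℕ) (hn : 4 ≤ n) :
    (∃ μ : ℝ → ℝ, IsDiffusiveProfile n μ) ∧
    (∀ μ μ' : ℝ → ℝ, IsDiffusiveProfile n μ → IsDiffusiveProfile n μ' →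
      Set.EqOn μ μ' (Set.Ioi 0)) := by
  exact ⟨profile_exists hn, fun u w hu hw y hy =>
    le_antisymm (profile_le hn hu hw hy) (profile_le hn hw hu hy)⟩
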